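/- arXiv:1809.08539 — 2 statements merged into one kernel-verified Lean document; each statement's English description precedes it below -/
import Mathlib

section
/- Fix δ₀, ρ₀ ∈ (0,1), set α₀ = (1−ρ₀)(1−δ₀)²/ρ₀ and β₀ = (1−ρ₀)(1−δ₀)/ρ₀, and for n ≥ 3 define t_n = δ₀√(2(1−ρ₀)log n), c_n = √(2(1−ρ₀)log(n)/ρ₀) · (1 − δ₀ − (1/4)·log log n / log n), and ψ_n(s) = φ(s) · Φ((t_n − √ρ₀ s)/√(1−ρ₀))^n. Then there is a constant C > 0 depending only on (δ₀, ρ₀) such that for all sufficiently large n, ∫_{−c_n}^{0} ψ_n(s) ds ≤ C · n^{−α₀} · (log n)^{(β₀−1)/2}. -/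
open MeasureTheory Real Filter

/-- The standard normal density `φ`. -/
noncomputable def stdNormalPDF (s : ℝ) : ℝ :=
  (Real.sqrt (2 * Real.pi))⁻¹ * Real.exp (-s ^ 2 / 2)

/-- The standard normal distribution function `Φ`. -/
noncomputable def stdNormalCDF (x : ℝ) : ℝ :=
  ∫ s in Set.Iic x, stdNormalPDF s

/-- `t_n = δ₀ √(2(1−ρ₀) log n)`. -/
noncomputable def tN (δ₀ ρ₀ : ℝ) (n : ℕ) : ℝ :=
  δ₀ * Real.sqrt (2 * (1 - ρ₀) * Real.log n)

/-- `c_n = √(2(1−ρ₀)log(n)/ρ₀) · (1 − δ₀ − (1/4)·log log n / log n)`. -/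
noncomputable def cN (δ₀ ρ₀ : ℝ) (n : ℕ) : ℝ :=
  Real.sqrt (2 * (1 - ρ₀) * Real.log n / ρ₀) *
    (1 - δ₀ - (1 / 4) * Real.log (Real.log n) / Real.log n)

/-- `ψ_n(s) = φ(s) · Φ((t_n − √ρ₀ s)/√(1−ρ₀))^n`. -/
noncomputable def psiN (δ₀ ρ₀ : ℝ) (n : ℕ) (s : ℝ) : ℝ :=
  stdNormalPDF s *
    stdNormalCDF ((tN δ₀ ρ₀ n - Real.sqrt ρ₀ * s) / Real.sqrt (1 - ρ₀)) ^ n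

/-!
Put `L = log n`, `κ = √ρ₀ / √(1 - ρ₀)`, and let `a = √(2L) (1 - log L / (4L))` be the level at
which `n (1 - Φ a)` is of order one. The argument of `Φ` in `ψ_n` at `s` equals `a - κ (c_n + s)`:
it meets the level `a` exactly at the left end `s = -c_n`. For `0 ≤ r ≤ a`, the quantity
`n (1 - Φ (a - r))` grows at least like `exp (a r / 2)`, so that `Φ (a - r) ^ n` decays faster than
every power of `exp (-a r)`. This beats the growth `φ s ≤ φ c_n * exp (c_n (c_n + s))` of the
density, as `c_n ≤ a / κ`. Hence the integral is at most a constant times `φ c_n / a`, which has the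
claimed order.
-/

section StdNormal

lemma stdNormalPDF_eq_gaussianPDFReal :
    stdNormalPDF = ProbabilityTheory.gaussianPDFReal 0 1 := by
  ext s
  simp [stdNormalPDF, ProbabilityTheory.gaussianPDFReal]

lemma stdNormalPDF_nonneg (s : ℝ) : 0 ≤ stdNormalPDF s := by
  unfold stdNormalPDF
  positivity

lemma integrable_stdNormalPDF : Integrable stdNormalPDF := by
  rw [stdNormalPDF_eq_gaussianPDFReal]
  exact ProbabilityTheory.integrable_gaussianPDFReal 0 1

lemma antitoneOn_stdNormalPDF : AntitoneOn stdNormalPDF (Set.Ici 0) := by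
  intro x hx y _ hxy
  have hx : 0 ≤ x := hx
  unfold stdNormalPDF
  gcongr

lemma stdNormalPDF_le_exp (s : ℝ) : stdNormalPDF s ≤ exp (-s ^ 2 / 2) := by
  have one_le_sqrt_two_pi : 1 ≤ √(2 * π) := one_le_sqrt.2 (by linarith [pi_gt_three])
  exact mul_le_of_le_one_left (exp_pos _).le (inv_le_one_of_one_le₀ one_le_sqrt_two_pi)

lemma stdNormalPDF_add (x y : ℝ) :
    stdNormalPDF (x + y) = stdNormalPDF x * exp (-(x * y) - y ^ 2 / 2) := by
  unfold stdNormalPDF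
  rw [mul_assoc, ← exp_add]
  ring_nf

lemma stdNormalPDF_le_mul_exp (c s : ℝ) :
    stdNormalPDF s ≤ stdNormalPDF c * exp (c * (c + s)) := by
  unfold stdNormalPDF
  rw [mul_assoc, ← exp_add]
  gcongr
  linarith [sq_nonneg (c + s)]

lemma stdNormalCDF_nonneg (x : ℝ) : 0 ≤ stdNormalCDF x :=
  setIntegral_nonneg measurableSet_Iic fun s _ => stdNormalPDF_nonneg s

lemma one_sub_stdNormalCDF (x : ℝ) :
    1 - stdNormalCDF x = ∫ s in Set.Ioi x, stdNormalPDF s := by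
  have total : ∫ s, stdNormalPDF s = 1 := by
    rw [stdNormalPDF_eq_gaussianPDFReal]
    exact ProbabilityTheory.integral_gaussianPDFReal_eq_one 0 one_ne_zero
  rw [← total, stdNormalCDF, sub_eq_iff_eq_add',
    intervalIntegral.integral_Iic_add_Ioi integrable_stdNormalPDF.integrableOn
      integrable_stdNormalPDF.integrableOn]

lemma mul_stdNormalPDF_add_le_one_sub_stdNormalCDF {x h : ℝ} (hx : 0 ≤ x) (hh : 0 ≤ h) :
    h * stdNormalPDF (x + h) ≤ 1 - stdNormalCDF x := by
  calc h * stdNormalPDF (x + h)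
      = stdNormalPDF (x + h) * volume.real (Set.Ioc x (x + h)) := by simp [hh, mul_comm]
    _ ≤ ∫ s in Set.Ioc x (x + h), stdNormalPDF s :=
        setIntegral_ge_of_const_le_real measurableSet_Ioc measure_Ioc_lt_top.ne
          (fun s hs => antitoneOn_stdNormalPDF (hx.trans hs.1.le) (add_nonneg hx hh) hs.2)
          integrable_stdNormalPDF.integrableOn
    _ ≤ ∫ s in Set.Ioi x, stdNormalPDF s :=
        setIntegral_mono_set integrable_stdNormalPDF.integrableOn
          (Eventually.of_forall stdNormalPDF_nonneg) Set.Ioc_subset_Ioi_self.eventuallyLE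
    _ = 1 - stdNormalCDF x := (one_sub_stdNormalCDF x).symm

lemma stdNormalPDF_div_one_add_le_one_sub_stdNormalCDF {x : ℝ} (hx : 0 ≤ x) :
    exp (-(3 / 2)) * (stdNormalPDF x / (1 + x)) ≤ 1 - stdNormalCDF x := by
  set h := (1 + x)⁻¹ with h_def
  have h_nonneg : 0 ≤ h := by positivity
  have h_le_one : h ≤ 1 := inv_le_one_of_one_le₀ (by linarith)
  have mul_h_le_one : x * h ≤ 1 := by
    rw [h_def, ← div_eq_mul_inv, div_le_one (by positivity)]
    linarith
  calc exp (-(3 / 2)) * (stdNormalPDF x / (1 + x))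
      = h * (stdNormalPDF x * exp (-(3 / 2))) := by rw [h_def]; ring
    _ ≤ h * (stdNormalPDF x * exp (-(x * h) - h ^ 2 / 2)) := by
        have := stdNormalPDF_nonneg x
        gcongr
        nlinarith
    _ = h * stdNormalPDF (x + h) := by rw [stdNormalPDF_add]
    _ ≤ 1 - stdNormalCDF x := mul_stdNormalPDF_add_le_one_sub_stdNormalCDF hx h_nonneg

lemma mul_exp_le_one_sub_stdNormalCDF_sub {a r : ℝ} (hr : 0 ≤ r) (hra : r ≤ a) :
    exp (-(3 / 2)) * (stdNormalPDF a / (1 + a)) * exp (a * r / 2) ≤ 1 - stdNormalCDF (a - r) := by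
  have pdf_nonneg := stdNormalPDF_nonneg a
  have : 0 < 1 + (a - r) := by linarith
  have exponent_le : a * r / 2 ≤ -(a * -r) - (-r) ^ 2 / 2 := by nlinarith
  calc exp (-(3 / 2)) * (stdNormalPDF a / (1 + a)) * exp (a * r / 2)
      = exp (-(3 / 2)) * (stdNormalPDF a * exp (a * r / 2) / (1 + a)) := by ring
    _ ≤ exp (-(3 / 2)) * (stdNormalPDF a * exp (-(a * -r) - (-r) ^ 2 / 2) / (1 + (a - r))) := by
        gcongr
        linarith
    _ = exp (-(3 / 2)) * (stdNormalPDF (a - r) / (1 + (a - r))) := by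
        rw [← stdNormalPDF_add, ← sub_eq_add_neg]
    _ ≤ 1 - stdNormalCDF (a - r) :=
        stdNormalPDF_div_one_add_le_one_sub_stdNormalCDF (by linarith)

end StdNormal

section Exponential

lemma pow_le_exp_neg_mul_one_sub {p : ℝ} (hp : 0 ≤ p) (n : ℕ) :
    p ^ n ≤ exp (-(n * (1 - p))) := by
  calc p ^ n ≤ exp (-(1 - p)) ^ n := by
        gcongr
        linarith [one_sub_le_exp_neg (1 - p)]
    _ = exp (-(n * (1 - p))) := by rw [← exp_nat_mul, mul_neg]

lemma exp_neg_mul_exp_le (m : ℕ) {K : ℝ} (hK : 0 < K) (z : ℝ) :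
    exp (-(K * exp z)) ≤ m.factorial / K ^ m * exp (-(m * z)) := by
  calc exp (-(K * exp z)) = (exp (K * exp z))⁻¹ := exp_neg _
    _ ≤ ((K * exp z) ^ m / m.factorial)⁻¹ := by
        gcongr
        exact pow_div_factorial_le_exp _ (by positivity) m
    _ = m.factorial / K ^ m * exp (-(m * z)) := by
        rw [mul_pow, ← exp_nat_mul, exp_neg]
        field_simp

lemma intervalIntegral_le_div_of_le_mul_exp {f : ℝ → ℝ} {A b l u : ℝ} (hA : 0 ≤ A) (hb : 0 < b)
    (f_nonneg : ∀ s, 0 ≤ f s) (f_le : ∀ s, l ≤ s → s ≤ u → f s ≤ A * exp (-(b * (s - l)))) :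
    ∫ s in l..u, f s ≤ A / b := by
  rcases le_total u l with hul | hlu
  · rw [intervalIntegral.integral_symm]
    have := intervalIntegral.integral_nonneg (μ := volume) hul fun s _ => f_nonneg s
    have : 0 ≤ A / b := by positivity
    linarith
  have majorant_eq : (fun s => A * exp (-(b * (s - l)))) =
      fun s => A * exp (b * l) * exp (-b * s) := by
    ext s
    rw [mul_assoc, ← exp_add]
    ring_nf
  have majorant_integrable : IntegrableOn (fun s => A * exp (-(b * (s - l)))) (Set.Ioi l) := by
    rw [majorant_eq]
    exact (integrableOn_exp_mul_Ioi (neg_lt_zero.2 hb) l).const_mul _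
  calc ∫ s in l..u, f s = ∫ s in Set.Ioc l u, f s := intervalIntegral.integral_of_le hlu
    _ ≤ ∫ s in Set.Ioc l u, A * exp (-(b * (s - l))) := by
        refine integral_mono_of_nonneg (Eventually.of_forall f_nonneg)
          (majorant_integrable.mono_set Set.Ioc_subset_Ioi_self) ?_
        filter_upwards [ae_restrict_mem measurableSet_Ioc] with s hs
        exact f_le s hs.1.le hs.2
    _ ≤ ∫ s in Set.Ioi l, A * exp (-(b * (s - l))) :=
        setIntegral_mono_set majorant_integrable (Eventually.of_forall fun s => by positivity)
          Set.Ioc_subset_Ioi_self.eventuallyLE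
    _ = A * exp (b * l) * (-exp (-b * l) / -b) := by
        rw [majorant_eq, integral_const_mul, integral_exp_mul_Ioi (neg_lt_zero.2 hb)]
    _ = A / b := by
        rw [neg_mul, exp_neg]
        field_simp

end Exponential

section CriticalLevel

/-- The level `a` at which `exp L * (1 - Φ a)` is of order one as `L → ∞`, that is, the typical size
of the maximum of `n` independent standard normal variables when `L = log n`. -/
noncomputable def criticalLevel (L : ℝ) : ℝ :=
  √(2 * L) * (1 - log L / (4 * L))

/-- A lower bound for `exp L * (1 - Φ a)` at the critical level `a` of `L`, valid for all `L ≥ 1`;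
see `criticalTailConst_mul_exp_le`. -/
noncomputable def criticalTailConst : ℝ :=
  exp (-(3 / 2)) * (exp (-1) / (3 * √(2 * π)))

lemma criticalTailConst_pos : 0 < criticalTailConst := by
  unfold criticalTailConst
  positivity

variable {L : ℝ}

lemma log_sq_le_four_mul (hL : 1 ≤ L) : log L ^ 2 ≤ 4 * L := by
  have log_le : log L ≤ 2 * √L := by
    have := log_le_self (sqrt_nonneg L)
    rw [log_sqrt (by linarith)] at this
    linarith
  calc log L ^ 2 ≤ (2 * √L) ^ 2 := by
        gcongr
        exact log_nonneg hL
    _ = 4 * L := by rw [mul_pow, sq_sqrt (by linarith)]; norm_num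

lemma sqrt_le_criticalLevel (hL : 0 < L) : √L ≤ criticalLevel L := by
  have correction_le : log L / (4 * L) ≤ 1 / 4 := by
    rw [div_le_div_iff₀ (by positivity) (by norm_num)]
    linarith [log_le_self hL.le]
  calc √L = 4 / 3 * √L * (3 / 4) := by ring
    _ ≤ √(2 * L) * (1 - log L / (4 * L)) := by
        gcongr
        · rw [sqrt_mul zero_le_two]
          gcongr
          exact le_sqrt_of_sq_le (by norm_num)
        · linarith

lemma criticalLevel_pos (hL : 0 < L) : 0 < criticalLevel L :=
  (sqrt_pos.2 hL).trans_le (sqrt_le_criticalLevel hL)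

lemma criticalLevel_le_two_mul_sqrt (hL : 1 ≤ L) : criticalLevel L ≤ 2 * √L := by
  have correction_nonneg : 0 ≤ log L / (4 * L) := div_nonneg (log_nonneg hL) (by linarith)
  calc criticalLevel L ≤ √(2 * L) := mul_le_of_le_one_right (sqrt_nonneg _) (by linarith)
    _ ≤ √(2 ^ 2 * L) := by
        gcongr
        norm_num
    _ = 2 * √L := by rw [sqrt_mul (by norm_num), sqrt_sq zero_le_two]

lemma criticalLevel_sq_le (hL : 1 ≤ L) : criticalLevel L ^ 2 / 2 ≤ L - log L / 2 + 1 := by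
  calc criticalLevel L ^ 2 / 2 = L - log L / 2 + log L ^ 2 / (16 * L) := by
        rw [criticalLevel, mul_pow, sq_sqrt (by linarith)]
        field_simp
        ring
    _ ≤ L - log L / 2 + 1 := by
        gcongr
        rw [div_le_one (by positivity)]
        linarith [log_sq_le_four_mul hL]

lemma sqrt_mul_le_exp_mul_stdNormalPDF_criticalLevel (hL : 1 ≤ L) :
    √L * (exp (-1) / √(2 * π)) ≤ exp L * stdNormalPDF (criticalLevel L) := by
  have sqrt_eq_exp : √L = exp (log L / 2) := by
    rw [← log_sqrt (by linarith), exp_log (by positivity)]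
  calc √L * (exp (-1) / √(2 * π))
      = exp L * ((√(2 * π))⁻¹ * exp (-(L - log L / 2 + 1))) := by
        rw [sqrt_eq_exp, show -(L - log L / 2 + 1) = -L + log L / 2 + -1 by ring, exp_add, exp_add,
          exp_neg L]
        field_simp
    _ ≤ exp L * stdNormalPDF (criticalLevel L) := by
        unfold stdNormalPDF
        rw [neg_div]
        gcongr
        exact criticalLevel_sq_le hL

lemma criticalTailConst_mul_exp_le {r : ℝ} (hL : 1 ≤ L) (hr : 0 ≤ r) (hra : r ≤ criticalLevel L) :
    criticalTailConst * exp (criticalLevel L * r / 2) ≤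
      exp L * (1 - stdNormalCDF (criticalLevel L - r)) := by
  set a := criticalLevel L
  have one_add_le : 1 + a ≤ 3 * √L := by
    linarith [criticalLevel_le_two_mul_sqrt hL, one_le_sqrt.2 hL]
  have const_le : exp (-1) / (3 * √(2 * π)) ≤ exp L * (stdNormalPDF a / (1 + a)) := by
    calc exp (-1) / (3 * √(2 * π)) = √L * (exp (-1) / √(2 * π)) / (3 * √L) := by field_simp
      _ ≤ exp L * stdNormalPDF a / (1 + a) := by
          refine div_le_div₀ ?_ (sqrt_mul_le_exp_mul_stdNormalPDF_criticalLevel hL) ?_ one_add_le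
          · exact mul_nonneg (exp_pos L).le (stdNormalPDF_nonneg a)
          · linarith
      _ = exp L * (stdNormalPDF a / (1 + a)) := mul_div_assoc ..
  calc criticalTailConst * exp (a * r / 2)
      ≤ exp (-(3 / 2)) * (exp L * (stdNormalPDF a / (1 + a))) * exp (a * r / 2) := by
        unfold criticalTailConst
        gcongr
    _ = exp L * (exp (-(3 / 2)) * (stdNormalPDF a / (1 + a)) * exp (a * r / 2)) := by ring
    _ ≤ exp L * (1 - stdNormalCDF (a - r)) := by
        gcongr
        exact mul_exp_le_one_sub_stdNormalCDF_sub hr hra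

lemma one_le_log_natCast {n : ℕ} (hn : 3 ≤ n) : 1 ≤ log n := by
  rw [le_log_iff_exp_le (by positivity)]
  exact exp_one_lt_three.le.trans (by exact_mod_cast hn)

lemma stdNormalCDF_criticalLevel_sub_pow_le {n : ℕ} (hn : 3 ≤ n) (m : ℕ) {r : ℝ} (hr : 0 ≤ r)
    (hra : r ≤ criticalLevel (log n)) :
    stdNormalCDF (criticalLevel (log n) - r) ^ n ≤
      m.factorial / criticalTailConst ^ m * exp (-(m * (criticalLevel (log n) * r / 2))) := by
  set a := criticalLevel (log n)
  have tail : criticalTailConst * exp (a * r / 2) ≤ n * (1 - stdNormalCDF (a - r)) := by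
    simpa only [exp_log (by positivity : (0 : ℝ) < n)] using
      criticalTailConst_mul_exp_le (one_le_log_natCast hn) hr hra
  calc stdNormalCDF (a - r) ^ n
      ≤ exp (-(n * (1 - stdNormalCDF (a - r)))) :=
        pow_le_exp_neg_mul_one_sub (stdNormalCDF_nonneg _) n
    _ ≤ exp (-(criticalTailConst * exp (a * r / 2))) := by gcongr
    _ ≤ m.factorial / criticalTailConst ^ m * exp (-(m * (a * r / 2))) :=
        exp_neg_mul_exp_le m criticalTailConst_pos _

end CriticalLevel

section Integrand

/-- The ratio `κ = √ρ / √(1 - ρ)`, which is the rate at which the argument of `Φ` in `ψ_n` decreases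
in `s`. -/
noncomputable def loadingRatio (ρ : ℝ) : ℝ :=
  √ρ / √(1 - ρ)

variable {δ ρ : ℝ} {n : ℕ}

lemma loadingRatio_pos (hρ : ρ ∈ Set.Ioo (0 : ℝ) 1) : 0 < loadingRatio ρ :=
  div_pos (sqrt_pos.2 hρ.1) (sqrt_pos.2 (sub_pos.2 hρ.2))

lemma tN_eq (hρ : ρ ≤ 1) :
    tN δ ρ n = √(1 - ρ) * (δ * √(2 * log n)) := by
  rw [tN, show 2 * (1 - ρ) * log n = (1 - ρ) * (2 * log n) by ring,
    sqrt_mul (sub_nonneg.2 hρ)]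
  ring

lemma loadingRatio_mul_cN (hρ : ρ ∈ Set.Ioo (0 : ℝ) 1) :
    loadingRatio ρ * cN δ ρ n = criticalLevel (log n) - δ * √(2 * log n) := by
  have ratio_mul_sqrt : loadingRatio ρ * √(2 * (1 - ρ) * log n / ρ) = √(2 * log n) := by
    have := hρ.1
    have := sub_pos.2 hρ.2
    rw [loadingRatio, ← sqrt_div hρ.1.le, ← sqrt_mul (by positivity)]
    congr 1
    field_simp
  rw [cN, ← mul_assoc, ratio_mul_sqrt, criticalLevel]
  ring

lemma psiN_nonneg (s : ℝ) : 0 ≤ psiN δ ρ n s :=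
  mul_nonneg (stdNormalPDF_nonneg s) (pow_nonneg (stdNormalCDF_nonneg _) n)

lemma psiN_eq (hρ : ρ ∈ Set.Ioo (0 : ℝ) 1) (s : ℝ) :
    psiN δ ρ n s = stdNormalPDF s *
      stdNormalCDF (criticalLevel (log n) - loadingRatio ρ * (cN δ ρ n + s)) ^ n := by
  have sqrt_pos : 0 < √(1 - ρ) := Real.sqrt_pos.2 (sub_pos.2 hρ.2)
  have argument_eq : (tN δ ρ n - √ρ * s) / √(1 - ρ) =
      criticalLevel (log n) - loadingRatio ρ * (cN δ ρ n + s) := by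
    rw [mul_add, loadingRatio_mul_cN hρ, tN_eq hρ.2.le, loadingRatio]
    field_simp
    ring
  rw [psiN, argument_eq]

lemma cN_le_div_loadingRatio (hδ : 0 ≤ δ) (hρ : ρ ∈ Set.Ioo (0 : ℝ) 1) :
    cN δ ρ n ≤ criticalLevel (log n) / loadingRatio ρ := by
  rw [le_div_iff₀ (loadingRatio_pos hρ), mul_comm, loadingRatio_mul_cN hρ]
  exact sub_le_self _ (by positivity)

lemma loadingRatio_mul_cN_add_le (hδ : 0 ≤ δ) (hρ : ρ ∈ Set.Ioo (0 : ℝ) 1) {s : ℝ} (hs : s ≤ 0) :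
    loadingRatio ρ * (cN δ ρ n + s) ≤ criticalLevel (log n) := by
  have δ_term_nonneg : 0 ≤ δ * √(2 * log n) := by positivity
  rw [mul_add, loadingRatio_mul_cN hρ]
  linarith [mul_nonpos_of_nonneg_of_nonpos (loadingRatio_pos hρ).le hs]

lemma psiN_le_mul_exp (hδ : 0 ≤ δ) (hρ : ρ ∈ Set.Ioo (0 : ℝ) 1) (hn : 3 ≤ n) {m : ℕ}
    (hm : 1 / loadingRatio ρ + 1 ≤ m * loadingRatio ρ / 2) {s : ℝ} (hcs : -cN δ ρ n ≤ s)
    (hs : s ≤ 0) :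
    psiN δ ρ n s ≤ m.factorial / criticalTailConst ^ m * stdNormalPDF (cN δ ρ n) *
      exp (-(criticalLevel (log n) * (cN δ ρ n + s))) := by
  set a := criticalLevel (log n)
  set c := cN δ ρ n
  set κ := loadingRatio ρ
  set M := m.factorial / criticalTailConst ^ m
  have κ_pos : 0 < κ := loadingRatio_pos hρ
  have w_nonneg : 0 ≤ c + s := by linarith
  have a_nonneg : 0 ≤ a := (criticalLevel_pos (by linarith [one_le_log_natCast hn])).le
  have rate_le : c + a ≤ a * (m * κ / 2) := by
    calc c + a ≤ a / κ + a := by gcongr; exact cN_le_div_loadingRatio hδ hρ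
      _ = a * (1 / κ + 1) := by ring
      _ ≤ a * (m * κ / 2) := by gcongr
  have M_nonneg : 0 ≤ M * stdNormalPDF c :=
    mul_nonneg (div_nonneg (by positivity) (pow_pos criticalTailConst_pos m).le)
      (stdNormalPDF_nonneg c)
  calc psiN δ ρ n s = stdNormalPDF s * stdNormalCDF (a - κ * (c + s)) ^ n := psiN_eq hρ s
    _ ≤ stdNormalPDF c * exp (c * (c + s)) * (M * exp (-(m * (a * (κ * (c + s)) / 2)))) :=
        mul_le_mul (stdNormalPDF_le_mul_exp c s)
          (stdNormalCDF_criticalLevel_sub_pow_le hn m (by positivity)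
            (loadingRatio_mul_cN_add_le hδ hρ hs))
          (pow_nonneg (stdNormalCDF_nonneg _) n)
          (mul_nonneg (stdNormalPDF_nonneg c) (exp_pos _).le)
    _ = M * stdNormalPDF c * exp (-((a * (m * κ / 2) - c) * (c + s))) := by
        rw [mul_mul_mul_comm, ← exp_add]
        ring_nf
    _ ≤ M * stdNormalPDF c * exp (-(a * (c + s))) := by
        gcongr
        linarith

lemma stdNormalPDF_cN_le (hρ : ρ ∈ Set.Ioo (0 : ℝ) 1) (hn : 1 < (n : ℝ)) :
    stdNormalPDF (cN δ ρ n) ≤ (n : ℝ) ^ (-((1 - ρ) * (1 - δ) ^ 2 / ρ)) *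
      log n ^ ((1 - ρ) * (1 - δ) / ρ / 2) := by
  have n_pos : (0 : ℝ) < n := one_pos.trans hn
  have L_pos : 0 < log n := log_pos hn
  have ρ_pos := hρ.1
  have one_sub_pos := sub_pos.2 hρ.2
  set L := log n with L_def
  have cN_sq : cN δ ρ n ^ 2 / 2 = L * ((1 - ρ) * (1 - δ) ^ 2 / ρ) -
      log L * ((1 - ρ) * (1 - δ) / ρ / 2) + (1 - ρ) * log L ^ 2 / (16 * ρ * L) := by
    rw [cN, ← L_def, mul_pow, sq_sqrt (by positivity)]
    field_simp
    ring
  have remainder_nonneg : 0 ≤ (1 - ρ) * log L ^ 2 / (16 * ρ * L) := by positivity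
  calc stdNormalPDF (cN δ ρ n) ≤ exp (-cN δ ρ n ^ 2 / 2) := stdNormalPDF_le_exp _
    _ ≤ exp (L * -((1 - ρ) * (1 - δ) ^ 2 / ρ) + log L * ((1 - ρ) * (1 - δ) / ρ / 2)) := by
        gcongr
        linarith
    _ = (n : ℝ) ^ (-((1 - ρ) * (1 - δ) ^ 2 / ρ)) * L ^ ((1 - ρ) * (1 - δ) / ρ / 2) := by
        rw [rpow_def_of_pos n_pos, rpow_def_of_pos L_pos, exp_add]

lemma stdNormalPDF_cN_div_criticalLevel_le (hρ : ρ ∈ Set.Ioo (0 : ℝ) 1) (hn : 1 < (n : ℝ)) :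
    stdNormalPDF (cN δ ρ n) / criticalLevel (log n) ≤
      (n : ℝ) ^ (-((1 - ρ) * (1 - δ) ^ 2 / ρ)) *
        log n ^ (((1 - ρ) * (1 - δ) / ρ - 1) / 2) := by
  have L_pos : 0 < log n := log_pos hn
  calc stdNormalPDF (cN δ ρ n) / criticalLevel (log n)
      ≤ (n : ℝ) ^ (-((1 - ρ) * (1 - δ) ^ 2 / ρ)) * log n ^ ((1 - ρ) * (1 - δ) / ρ / 2) /
          √(log n) := by
        gcongr
        · exact stdNormalPDF_cN_le hρ hn
        · exact sqrt_le_criticalLevel L_pos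
    _ = (n : ℝ) ^ (-((1 - ρ) * (1 - δ) ^ 2 / ρ)) *
          log n ^ (((1 - ρ) * (1 - δ) / ρ - 1) / 2) := by
        rw [sqrt_eq_rpow, mul_div_assoc, ← rpow_sub L_pos, sub_div]

end Integrand

theorem psi_integral_middle_interval_upper_bound_general (ρ₀ : ℝ)
    (hρ : ρ₀ ∈ Set.Ioo (0 : ℝ) 1) :
    ∃ C : ℝ, 0 < C ∧ ∀ δ₀ : ℝ, 0 ≤ δ₀ → ∀ n : ℕ, 3 ≤ n →
      ∫ s in (-(cN δ₀ ρ₀ n))..0, psiN δ₀ ρ₀ n s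
        ≤ C * (n : ℝ) ^ (-((1 - ρ₀) * (1 - δ₀) ^ 2 / ρ₀))
            * Real.log n ^ (((1 - ρ₀) * (1 - δ₀) / ρ₀ - 1) / 2) := by
  have κ_pos := loadingRatio_pos hρ
  obtain ⟨m, hm⟩ := exists_nat_ge ((1 / loadingRatio ρ₀ + 1) * 2 / loadingRatio ρ₀)
  have hm : 1 / loadingRatio ρ₀ + 1 ≤ m * loadingRatio ρ₀ / 2 := by
    rwa [le_div_iff₀ two_pos, ← div_le_iff₀ κ_pos]
  have C_pos : 0 < m.factorial / criticalTailConst ^ m :=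
    div_pos (by positivity) (pow_pos criticalTailConst_pos m)
  refine ⟨m.factorial / criticalTailConst ^ m, C_pos, fun δ₀ hδ n hn => ?_⟩
  have one_lt_n : (1 : ℝ) < n := by exact_mod_cast (by omega : 1 < n)
  refine (intervalIntegral_le_div_of_le_mul_exp
    (mul_nonneg C_pos.le (stdNormalPDF_nonneg (cN δ₀ ρ₀ n)))
    (criticalLevel_pos (log_pos one_lt_n)) psiN_nonneg fun s hcs hs => by
      rw [sub_neg_eq_add, add_comm s]
      exact psiN_le_mul_exp hδ hρ hn hm hcs hs).trans ?_
  rw [mul_div_assoc, mul_assoc]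
  gcongr
  exact stdNormalPDF_cN_div_criticalLevel_le hρ one_lt_n

theorem psi_integral_middle_interval_upper_bound (δ₀ ρ₀ : ℝ)
    (hδ : δ₀ ∈ Set.Ioo (0 : ℝ) 1) (hρ : ρ₀ ∈ Set.Ioo (0 : ℝ) 1) :
    ∃ C : ℝ, 0 < C ∧
      ∀ᶠ n : ℕ in atTop,
        ∫ s in (-(cN δ₀ ρ₀ n))..0, psiN δ₀ ρ₀ n s
          ≤ C * (n : ℝ) ^ (-((1 - ρ₀) * (1 - δ₀) ^ 2 / ρ₀))
              * Real.log n ^ (((1 - ρ₀) * (1 - δ₀) / ρ₀ - 1) / 2) := by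
  obtain ⟨C, hC, bound⟩ := psi_integral_middle_interval_upper_bound_general ρ₀ hρ
  exact ⟨C, hC, eventually_atTop.2 ⟨3, bound δ₀ hδ.1.le⟩⟩
end

section
/- Fix δ₀, ρ₀ ∈ (0,1). There exists a constant c > 0 depending only on (δ₀, ρ₀) such that for all sufficiently large n and all δ ∈ [0, 1 − δ₀ − (1/4)·log log n / log n], one has n · log Φ(√(2 log n)·(δ₀ + δ)) ≤ −(c n / √(log n)) · exp(−log(n)·(δ₀ + δ)²), where Φ is the standard normal distribution function. -/
open MeasureTheory Real Filter

/-!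
The density `φ` decreases on `[0, ∞)`, so `1 - Φ x ≥ h * φ (x + h)` for `x, h ≥ 0`. The step
`h = 1 / (1 + x)` gives `(x + h) ^ 2 ≤ x ^ 2 + 3`, whence the Mills-type bound
`1 - Φ x ≥ exp (-3 / 2) * φ x / (1 + x)`, and `log (Φ x) ≤ Φ x - 1`. At `x = √(2 * log y) * t` the
factor `exp (-x ^ 2 / 2)` is `exp (-(log y) * t ^ 2)`, and `1 + x` is `O(√(log y))` as long as `t`
is bounded above.
-/

lemma mul_le_setIntegral_Ioi_of_antitoneOn {f : ℝ → ℝ} {x h : ℝ}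
    (hf : AntitoneOn f (Set.Ioi x)) (hf_nonneg : ∀ s ∈ Set.Ioi x, 0 ≤ f s)
    (hf_int : IntegrableOn f (Set.Ioi x)) (hh : 0 ≤ h) :
    h * f (x + h) ≤ ∫ s in Set.Ioi x, f s := by
  have end_le : ∀ s ∈ Set.Ioc x (x + h), f (x + h) ≤ f s := fun s hs =>
    hf hs.1 (hs.1.trans_le hs.2) hs.2
  calc h * f (x + h) = f (x + h) * volume.real (Set.Ioc x (x + h)) := by simp [hh, mul_comm]
    _ ≤ ∫ s in Set.Ioc x (x + h), f s :=
      setIntegral_ge_of_const_le_real measurableSet_Ioc measure_Ioc_lt_top.ne end_le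
        (hf_int.mono_set Set.Ioc_subset_Ioi_self)
    _ ≤ ∫ s in Set.Ioi x, f s :=
      setIntegral_mono_set hf_int (ae_restrict_of_forall_mem measurableSet_Ioi hf_nonneg)
        Set.Ioc_subset_Ioi_self.eventuallyLE

lemma stdNormalPDF_pos (s : ℝ) : 0 < stdNormalPDF s := by
  unfold stdNormalPDF
  positivity

lemma integral_stdNormalPDF : ∫ s, stdNormalPDF s = 1 :=
  stdNormalPDF_eq_gaussianPDFReal ▸
    ProbabilityTheory.integral_gaussianPDFReal_eq_one 0 one_ne_zero

lemma exp_neg_mul_stdNormalPDF_le {x y a : ℝ} (h : y ^ 2 ≤ x ^ 2 + 2 * a) :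
    exp (-a) * stdNormalPDF x ≤ stdNormalPDF y := by
  have exponent_le : -a + -x ^ 2 / 2 ≤ -y ^ 2 / 2 := by linarith
  calc exp (-a) * stdNormalPDF x = (√(2 * π))⁻¹ * exp (-a + -x ^ 2 / 2) := by
        rw [stdNormalPDF, exp_add]; ring
    _ ≤ stdNormalPDF y := by unfold stdNormalPDF; gcongr

lemma stdNormalPDF_le_of_sq_le {x y : ℝ} (h : y ^ 2 ≤ x ^ 2) :
    stdNormalPDF x ≤ stdNormalPDF y := by
  simpa using exp_neg_mul_stdNormalPDF_le (a := 0) (by simpa using h)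

lemma stdNormalPDF_sqrt_two_mul_mul {L : ℝ} (hL : 0 ≤ L) (t : ℝ) :
    stdNormalPDF (√(2 * L) * t) = (√(2 * π))⁻¹ * exp (-L * t ^ 2) := by
  rw [stdNormalPDF, mul_pow, sq_sqrt (by positivity)]
  ring_nf

lemma stdNormalCDF_pos (x : ℝ) : 0 < stdNormalCDF x := by
  have support_eq : Function.support stdNormalPDF = Set.univ :=
    Set.eq_univ_of_forall fun s => (stdNormalPDF_pos s).ne'
  rw [stdNormalCDF, setIntegral_pos_iff_support_of_nonneg_ae
    (ae_of_all _ fun s => (stdNormalPDF_pos s).le) integrable_stdNormalPDF.integrableOn, support_eq]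
  simp

lemma monotone_stdNormalCDF : Monotone stdNormalCDF := fun _ _ hxy =>
  setIntegral_mono_set integrable_stdNormalPDF.integrableOn
    (ae_of_all _ fun s => (stdNormalPDF_pos s).le) (Set.Iic_subset_Iic.mpr hxy).eventuallyLE

lemma exp_mul_stdNormalPDF_div_le_one_sub_stdNormalCDF {x : ℝ} (hx : 0 ≤ x) :
    exp (-(3 / 2)) * stdNormalPDF x / (1 + x) ≤ 1 - stdNormalCDF x := by
  have step_le_one : (1 + x)⁻¹ ≤ 1 := inv_le_one_of_one_le₀ (by linarith)
  have mul_step_le_one : x * (1 + x)⁻¹ ≤ 1 := by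
    rw [← div_eq_mul_inv, div_le_one (by positivity)]
    linarith
  have sq_add_step_le : (x + (1 + x)⁻¹) ^ 2 ≤ x ^ 2 + 2 * (3 / 2) := by
    have step_sq_le_one : (1 + x)⁻¹ ^ 2 ≤ 1 := pow_le_one₀ (by positivity) step_le_one
    linarith [add_sq x (1 + x)⁻¹]
  calc exp (-(3 / 2)) * stdNormalPDF x / (1 + x)
      = (1 + x)⁻¹ * (exp (-(3 / 2)) * stdNormalPDF x) := div_eq_inv_mul _ _
    _ ≤ (1 + x)⁻¹ * stdNormalPDF (x + (1 + x)⁻¹) := by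
      gcongr
      exact exp_neg_mul_stdNormalPDF_le sq_add_step_le
    _ ≤ ∫ s in Set.Ioi x, stdNormalPDF s :=
      mul_le_setIntegral_Ioi_of_antitoneOn
        (antitoneOn_stdNormalPDF.mono fun _ hs => hx.trans (le_of_lt hs))
        (fun s _ => (stdNormalPDF_pos s).le) integrable_stdNormalPDF.integrableOn (by positivity)
    _ = 1 - stdNormalCDF x := (one_sub_stdNormalCDF x).symm

lemma log_stdNormalCDF_le (x : ℝ) :
    log (stdNormalCDF x) ≤ -(exp (-(3 / 2)) * stdNormalPDF x / (1 + max x 0)) := by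
  have pdf_le : stdNormalPDF x ≤ stdNormalPDF (max x 0) := by
    refine stdNormalPDF_le_of_sq_le (sq_le_sq.mpr ?_)
    rw [abs_of_nonneg (le_max_right x 0)]
    exact max_le (le_abs_self x) (abs_nonneg x)
  calc log (stdNormalCDF x) ≤ log (stdNormalCDF (max x 0)) :=
        log_le_log (stdNormalCDF_pos x) (monotone_stdNormalCDF (le_max_left x 0))
    _ ≤ stdNormalCDF (max x 0) - 1 := log_le_sub_one_of_pos (stdNormalCDF_pos _)
    _ ≤ -(exp (-(3 / 2)) * stdNormalPDF (max x 0) / (1 + max x 0)) := by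
      linarith [exp_mul_stdNormalPDF_div_le_one_sub_stdNormalCDF (le_max_right x 0)]
    _ ≤ -(exp (-(3 / 2)) * stdNormalPDF x / (1 + max x 0)) := by gcongr

lemma one_add_max_sqrt_two_mul_mul_le {L M t : ℝ} (hL : 1 ≤ L) (ht : t ≤ M) :
    1 + max (√(2 * L) * t) 0 ≤ (1 + √2 * |M|) * √L := by
  have sqrt_mul_le : √(2 * L) * t ≤ √2 * |M| * √L :=
    calc √(2 * L) * t ≤ √(2 * L) * |M| := by gcongr; exact ht.trans (le_abs_self M)
      _ = √2 * |M| * √L := by rw [sqrt_mul zero_le_two]; ring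
  calc 1 + max (√(2 * L) * t) 0 ≤ √L + √2 * |M| * √L :=
        add_le_add (one_le_sqrt.mpr hL) (max_le sqrt_mul_le (by positivity))
    _ = (1 + √2 * |M|) * √L := by ring

lemma log_stdNormalCDF_sqrt_two_mul_mul_le {L M t : ℝ} (hL : 1 ≤ L) (ht : t ≤ M) :
    log (stdNormalCDF (√(2 * L) * t)) ≤
      -(exp (-(3 / 2)) * (√(2 * π))⁻¹ / (1 + √2 * |M|) / √L * exp (-L * t ^ 2)) :=
  calc log (stdNormalCDF (√(2 * L) * t))
      ≤ -(exp (-(3 / 2)) * stdNormalPDF (√(2 * L) * t) / (1 + max (√(2 * L) * t) 0)) :=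
        log_stdNormalCDF_le _
    _ ≤ -(exp (-(3 / 2)) * stdNormalPDF (√(2 * L) * t) / ((1 + √2 * |M|) * √L)) := by
      have pdf_nonneg := (stdNormalPDF_pos (√(2 * L) * t)).le
      gcongr
      exact one_add_max_sqrt_two_mul_mul_le hL ht
    _ = -(exp (-(3 / 2)) * (√(2 * π))⁻¹ / (1 + √2 * |M|) / √L * exp (-L * t ^ 2)) := by
      rw [stdNormalPDF_sqrt_two_mul_mul (zero_le_one.trans hL), ← div_div]
      ring

lemma one_le_log_of_exp_one_le {y : ℝ} (hy : exp 1 ≤ y) : 1 ≤ log y :=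
  (le_log_iff_exp_le ((exp_pos 1).trans_le hy)).mpr hy

lemma log_log_div_log_nonneg {y : ℝ} (hy : exp 1 ≤ y) : 0 ≤ log (log y) / log y :=
  div_nonneg (log_nonneg (one_le_log_of_exp_one_le hy))
    (zero_le_one.trans (one_le_log_of_exp_one_le hy))

theorem n_log_Phi_upper_bound_general (M : ℝ) :
    ∃ c : ℝ, 0 < c ∧ ∀ y : ℝ, exp 1 ≤ y → ∀ t ≤ M,
      y * log (stdNormalCDF (√(2 * log y) * t)) ≤
        -(c * y / √(log y)) * exp (-(log y) * t ^ 2) := by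
  refine ⟨exp (-(3 / 2)) * (√(2 * π))⁻¹ / (1 + √2 * |M|), by positivity, fun y hy t ht => ?_⟩
  have y_nonneg : 0 ≤ y := (exp_pos 1).le.trans hy
  calc y * log (stdNormalCDF (√(2 * log y) * t))
      ≤ y * -(exp (-(3 / 2)) * (√(2 * π))⁻¹ / (1 + √2 * |M|) / √(log y)
          * exp (-(log y) * t ^ 2)) := by
        gcongr
        exact log_stdNormalCDF_sqrt_two_mul_mul_le (one_le_log_of_exp_one_le hy) ht
    _ = _ := by ring

theorem n_log_Phi_upper_bound (δ₀ ρ₀ : ℝ)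
    (hδ : δ₀ ∈ Set.Ioo (0 : ℝ) 1) (hρ : ρ₀ ∈ Set.Ioo (0 : ℝ) 1) :
    ∃ c : ℝ, 0 < c ∧
      ∀ᶠ n : ℕ in atTop,
        ∀ δ ∈ Set.Icc (0 : ℝ)
            (1 - δ₀ - (1 / 4) * Real.log (Real.log n) / Real.log n),
          (n : ℝ) * Real.log (stdNormalCDF (Real.sqrt (2 * Real.log n) * (δ₀ + δ)))
            ≤ -(c * n / Real.sqrt (Real.log n))
                * Real.exp (-(Real.log n) * (δ₀ + δ) ^ 2) := by
  obtain ⟨c, hc, bound⟩ := n_log_Phi_upper_bound_general 1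
  refine ⟨c, hc, ?_⟩
  filter_upwards [tendsto_natCast_atTop_atTop.eventually_ge_atTop (exp 1)] with n hn δ hδn
  rw [Set.mem_Icc, mul_div_assoc] at hδn
  exact bound n hn (δ₀ + δ) (by linarith [log_log_div_log_nonneg hn])
end
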